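/- Let G = (V, E) be a graph with edges e₁, …, e_m, let G_E be the edge-gadget graph for G, and let M be any fractional matching of G_E. For every edge e_j = {v_i, v_{i'}} ∈ E: if the agent f_j is fully matched under M (i.e., M({f_j, e_j^i}) + M({f_j, e_j^{i'}}) = 1), then U_M(e_j^i) < sat(e_j^i, u_i) = 5 or U_M(e_j^{i'}) < sat(e_j^{i'}, u_{i'}) = 7. -/

import Mathlib

/-!
Write `a, b` for the weights of `f_j` towards `e_j^i`, `e_j^{i'}` and `x, y` for those of `e_j`.
The only agent that `e_j^i` prefers to `u_i` is `e_j` (by 2), and it likes `f_j` less than `u_i`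
by 2; as its total weight is at most `1`, `U_M(e_j^i) ≤ 5 + 2x - 2a`. Likewise
`U_M(e_j^{i'}) ≤ 7 + 2y - 3b`. If neither utility is below its threshold, then `a ≤ x` and
`3b ≤ 2y`. Since `a + x ≤ 1`, this gives `a ≤ 1/2`, and since `x + y ≤ 1` the total weight of `f_j`
is `a + b ≤ a/3 + 2(x + y)/3 ≤ 1/6 + 2/3 = 5/6`, so `f_j` is not fully matched.
The bound `5/6` is attained: take `a = x = y = 1/2`, `b = 1/3` and `M(e_j^{i'}, u_{i'}) = 1/6`.
-/

open Finset
open scoped Classical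

variable {V : Type*}

/-- Two agents find each other acceptable iff at least one of them assigns
positive satisfaction to the other. -/
def Adj (sat : V → V → ℚ) (u v : V) : Prop :=
  0 < sat u v ∨ 0 < sat v u

instance (sat : V → V → ℚ) (u v : V) : Decidable (Adj sat u v) :=
  inferInstanceAs (Decidable (0 < sat u v ∨ 0 < sat v u))

/-- `sat` describes a valid instance: satisfactions are nonnegative, an agent has
zero satisfaction towards itself, and the acceptability graph has no isolated vertices. -/
structure IsInstance [Fintype V] (sat : V → V → ℚ) : Prop where
  nonneg : ∀ u v, 0 ≤ sat u v
  sat_self : ∀ u, sat u u = 0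
  noIsolated : ∀ v, ∃ u, Adj sat v u

/-- `M` is a fractional matching of the acceptability graph of `sat`. -/
structure IsMatching [Fintype V] (sat : V → V → ℚ) (M : V → V → ℝ) : Prop where
  symm : ∀ u v, M u v = M v u
  nonneg : ∀ u v, 0 ≤ M u v
  support : ∀ u v, ¬ Adj sat u v → M u v = 0
  degree_le_one : ∀ v, ∑ u, M v u ≤ 1

/-- `M(x, ≽ y)`: total matching value of `x` with neighbours liked at least as much as `y`. -/
noncomputable def wge [Fintype V] (sat : V → V → ℚ) (M : V → V → ℝ) (x y : V) : ℝ :=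
  ∑ z ∈ Finset.univ.filter (fun z => Adj sat x z ∧ sat x y ≤ sat x z), M x z

/-- `M(x, ≻ y)`: total matching value of `x` with neighbours strictly preferred to `y`. -/
noncomputable def wgt [Fintype V] (sat : V → V → ℚ) (M : V → V → ℝ) (x y : V) : ℝ :=
  ∑ z ∈ Finset.univ.filter (fun z => Adj sat x z ∧ sat x y < sat x z), M x z

/-- Utility of agent `v` under matching `M`. -/
noncomputable def util [Fintype V] (sat : V → V → ℚ) (M : V → V → ℝ) (v : V) : ℝ :=
  ∑ u, (sat v u : ℝ) * M v u

/-- Social welfare of a matching. -/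
noncomputable def welfare [Fintype V] (sat : V → V → ℚ) (M : V → V → ℝ) : ℝ :=
  ∑ v, util sat M v

/-- Ordinal stability: no edge is ordinally blocking. -/
def OrdStable [Fintype V] (sat : V → V → ℚ) (M : V → V → ℝ) : Prop :=
  ∀ u v, Adj sat u v → ¬ (wge sat M u v < 1 ∧ wge sat M v u < 1)

/-- Cardinal stability: no edge is cardinally blocking. -/
def CardStable [Fintype V] (sat : V → V → ℚ) (M : V → V → ℝ) : Prop :=
  ∀ u v, Adj sat u v → ¬ (util sat M u < (sat u v : ℝ) ∧ util sat M v < (sat v u : ℝ))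

/-- Linear stability: no edge is linearly blocking. -/
def LinStable [Fintype V] (sat : V → V → ℚ) (M : V → V → ℝ) : Prop :=
  ∀ u v, Adj sat u v → ¬ (wge sat M u v + wge sat M v u - M u v < 1)

/-- Strict preferences: no ties among distinct neighbours. -/
def StrictPrefs (sat : V → V → ℚ) : Prop :=
  ∀ v x y, Adj sat v x → Adj sat v y → x ≠ y → sat v x ≠ sat v y

/-- The acceptability graph is bipartite with parts `U` and its complement. -/
def BipartiteWith (sat : V → V → ℚ) (U : Set V) : Prop :=
  ∀ u v, Adj sat u v → (u ∈ U ↔ v ∉ U)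

/-- Integral matching. -/
def IntegralMatching (M : V → V → ℝ) : Prop := ∀ u v, M u v = 0 ∨ M u v = 1

/-- Number of fully matched agents. -/
noncomputable def nfully [Fintype V] (M : V → V → ℝ) : ℕ :=
  (Finset.univ.filter (fun v => ∑ u, M v u = (1 : ℝ))).card

/-- The agents of the edge-gadget graph `G_E`: for each edge `e_j` of `G` (with lower
endpoint `lo j` and higher endpoint `hi j`) there are six agents
`inl (j, 0) = e_j`, `inl (j, 1) = f_j`, `inl (j, 2) = g_j`, `inl (j, 3) = h_j`,
`inl (j, 4) = e_j^i` and `inl (j, 5) = e_j^{i'}`, and for each vertex `v_i` of `G`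
there is an agent `inr i = u_i`. -/
abbrev GV (n m : ℕ) := (Fin m × Fin 6) ⊕ Fin n

/-- The satisfaction function of the edge-gadget graph `G_E`, where `s i j` is the
(arbitrary, nonnegative, bounded by `5m`) value `sat(u_i, e_j^i)`. -/
def gadgetSat (n m : ℕ) (lo hi : Fin m → Fin n) (s : Fin n → Fin m → ℚ) :
    GV n m → GV n m → ℚ := fun a b =>
  match a, b with
  | Sum.inl (j, c), Sum.inl (j', c') =>
    if j = j' then
      if c = 0 ∧ c' = 3 then 2 * (m : ℚ) ^ 2 + 8        -- sat(e_j, h_j)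
      else if c = 3 ∧ c' = 0 then 1                     -- sat(h_j, e_j)
      else if c = 0 ∧ c' = 4 then 2 * (m : ℚ) ^ 2 + 2   -- sat(e_j, e_j^i)
      else if c = 4 ∧ c' = 0 then 7                     -- sat(e_j^i, e_j)
      else if c = 0 ∧ c' = 5 then 2 * (m : ℚ) ^ 2       -- sat(e_j, e_j^{i'})
      else if c = 5 ∧ c' = 0 then 9                     -- sat(e_j^{i'}, e_j)
      else if c = 2 ∧ c' = 4 then 2 * (m : ℚ) ^ 2 + 7   -- sat(g_j, e_j^i)
      else if c = 4 ∧ c' = 2 then 2                     -- sat(e_j^i, g_j)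
      else if c = 2 ∧ c' = 3 then 2 * (m : ℚ) ^ 2 + 5   -- sat(g_j, h_j)
      else if c = 3 ∧ c' = 2 then 4                     -- sat(h_j, g_j)
      else if c = 2 ∧ c' = 5 then 2 * (m : ℚ) ^ 2 + 4   -- sat(g_j, e_j^{i'})
      else if c = 5 ∧ c' = 2 then 5                     -- sat(e_j^{i'}, g_j)
      else if c = 1 ∧ c' = 4 then 2 * (m : ℚ) ^ 2 + 6   -- sat(f_j, e_j^i)
      else if c = 4 ∧ c' = 1 then 3                     -- sat(e_j^i, f_j)
      else if c = 1 ∧ c' = 5 then 2 * (m : ℚ) ^ 2 + 5   -- sat(f_j, e_j^{i'})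
      else if c = 5 ∧ c' = 1 then 4                     -- sat(e_j^{i'}, f_j)
      else 0
    else 0
  | Sum.inl (j, c), Sum.inr i =>
    if c = 4 ∧ i = lo j then 5                              -- sat(e_j^i, u_i)
    else if c = 5 ∧ i = hi j then 7                         -- sat(e_j^{i'}, u_{i'})
    else 0
  | Sum.inr i, Sum.inl (j, c) =>
    if c = 4 ∧ i = lo j then s i j                          -- sat(u_i, e_j^i)
    else if c = 5 ∧ i = hi j then s i j                     -- sat(u_{i'}, e_j^{i'})
    else 0
  | Sum.inr _, Sum.inr _ => 0

section Matching

variable [Fintype V] {sat : V → V → ℚ} {M : V → V → ℝ}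

lemma IsMatching.sum_le_one (hM : IsMatching sat M) (v : V) (t : Finset V) :
    ∑ u ∈ t, M v u ≤ 1 :=
  (sum_le_univ_sum_of_nonneg (hM.nonneg v)).trans (hM.degree_le_one v)

lemma IsMatching.add_le_one (hM : IsMatching sat M) (v : V) {a b : V} (hab : a ≠ b) :
    M v a + M v b ≤ 1 :=
  (sum_pair hab).symm.trans_le (hM.sum_le_one v {a, b})

lemma IsMatching.sum_eq_add_of_adj_imp (hM : IsMatching sat M) {v a b : V} (hab : a ≠ b)
    (h : ∀ u, Adj sat v u → u = a ∨ u = b) : ∑ u, M v u = M v a + M v b :=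
  Fintype.sum_eq_add a b hab fun u hu =>
    hM.support v u fun hadj => (h u hadj).elim hu.1 hu.2

lemma IsMatching.util_le_add_sum (hM : IsMatching sat M) {v : V} {t : Finset V} {c : ℝ}
    (hc : 0 ≤ c) (h : ∀ u ∉ t, (sat v u : ℝ) ≤ c) :
    util sat M v ≤ c + ∑ u ∈ t, ((sat v u : ℝ) - c) * M v u := by
  have excess_le : ∑ u, ((sat v u : ℝ) - c) * M v u ≤ ∑ u ∈ t, ((sat v u : ℝ) - c) * M v u :=
    sum_le_sum_of_subset_of_nonpos' (subset_univ t) fun u _ hu =>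
      mul_nonpos_of_nonpos_of_nonneg (sub_nonpos.2 (h u hu)) (hM.nonneg v u)
  calc util sat M v
      = c * ∑ u, M v u + ∑ u, ((sat v u : ℝ) - c) * M v u := by
        rw [util, mul_sum, ← sum_add_distrib]
        exact sum_congr rfl fun u _ => by ring
    _ ≤ c + ∑ u ∈ t, ((sat v u : ℝ) - c) * M v u :=
        add_le_add (mul_le_of_le_one_right hc (hM.degree_le_one v)) excess_le

end Matching

namespace GV

variable {n m : ℕ}

/-- The agent `e_j` of the edge gadget. -/
abbrev e (j : Fin m) : GV n m := Sum.inl (j, 0)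

/-- The agent `f_j` of the edge gadget. -/
abbrev f (j : Fin m) : GV n m := Sum.inl (j, 1)

/-- The agent `e_j^i` of the edge gadget, which represents the lower endpoint of `e_j`. -/
abbrev eLo (j : Fin m) : GV n m := Sum.inl (j, 4)

/-- The agent `e_j^{i'}` of the edge gadget, which represents the higher endpoint of `e_j`. -/
abbrev eHi (j : Fin m) : GV n m := Sum.inl (j, 5)

end GV

section EdgeGadget

open GV

variable {n m : ℕ} {lo hi : Fin m → Fin n} {s : Fin n → Fin m → ℚ} {M : GV n m → GV n m → ℝ}

lemma eq_eLo_or_eq_eHi_of_adj_f {j : Fin m} {u : GV n m}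
    (hu : Adj (gadgetSat n m lo hi s) (f j) u) : u = eLo j ∨ u = eHi j := by
  rcases u with ⟨k, c⟩ | i
  · obtain rfl : j = k := by
      by_contra hjk
      simp [Adj, gadgetSat, hjk, Ne.symm hjk] at hu
    fin_cases c <;> simp_all [Adj, gadgetSat]
  · simp [Adj, gadgetSat] at hu

lemma gadgetSat_eLo_le {j : Fin m} {u : GV n m} (hu : u ≠ e j) :
    gadgetSat n m lo hi s (eLo j) u ≤ 5 := by
  rcases u with ⟨k, c⟩ | i
  · by_cases hjk : j = k
    · subst hjk
      fin_cases c <;> simp_all [gadgetSat] <;> norm_num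
    · simp [gadgetSat, hjk]
  · by_cases hilo : i = lo j <;> simp [gadgetSat, hilo]

lemma gadgetSat_eHi_le {j : Fin m} {u : GV n m} (hu : u ≠ e j) :
    gadgetSat n m lo hi s (eHi j) u ≤ 7 := by
  rcases u with ⟨k, c⟩ | i
  · by_cases hjk : j = k
    · subst hjk
      fin_cases c <;> simp_all [gadgetSat] <;> norm_num
    · simp [gadgetSat, hjk]
  · by_cases hihi : i = hi j <;> simp [gadgetSat, hihi]

lemma util_eLo_le (hM : IsMatching (gadgetSat n m lo hi s) M) (j : Fin m) :
    util (gadgetSat n m lo hi s) M (eLo j) ≤ 5 + 2 * M (e j) (eLo j) - 2 * M (f j) (eLo j) := by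
  have bound := hM.util_le_add_sum (v := eLo j) (t := {e j, f j}) (c := 5) (by norm_num)
    fun u hu => mod_cast gadgetSat_eLo_le fun h => hu (by simp [h])
  have sat_e : gadgetSat n m lo hi s (eLo j) (e j) = 7 := by simp [gadgetSat]
  have sat_f : gadgetSat n m lo hi s (eLo j) (f j) = 3 := by simp [gadgetSat]
  rw [sum_pair (by simp), sat_e, sat_f, hM.symm (eLo j) (e j), hM.symm (eLo j) (f j)] at bound
  push_cast at bound
  linarith

lemma util_eHi_le (hM : IsMatching (gadgetSat n m lo hi s) M) (j : Fin m) :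
    util (gadgetSat n m lo hi s) M (eHi j) ≤ 7 + 2 * M (e j) (eHi j) - 3 * M (f j) (eHi j) := by
  have bound := hM.util_le_add_sum (v := eHi j) (t := {e j, f j}) (c := 7) (by norm_num)
    fun u hu => mod_cast gadgetSat_eHi_le fun h => hu (by simp [h])
  have sat_e : gadgetSat n m lo hi s (eHi j) (e j) = 9 := by simp [gadgetSat]
  have sat_f : gadgetSat n m lo hi s (eHi j) (f j) = 4 := by simp [gadgetSat]
  rw [sum_pair (by simp), sat_e, sat_f, hM.symm (eHi j) (e j), hM.symm (eHi j) (f j)] at bound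
  push_cast at bound
  linarith

theorem edgeGadget_fj_fullyMatched_general (hM : IsMatching (gadgetSat n m lo hi s) M) (j : Fin m)
    (hf : 5 / 6 < ∑ u, M (f j) u) :
    util (gadgetSat n m lo hi s) M (eLo j) < 5 ∨ util (gadgetSat n m lo hi s) M (eHi j) < 7 := by
  by_contra! ⟨hLo, hHi⟩
  have f_le_e_lo : M (f j) (eLo j) ≤ M (e j) (eLo j) := by linarith [util_eLo_le hM j]
  have f_le_e_hi : 3 * M (f j) (eHi j) ≤ 2 * M (e j) (eHi j) := by linarith [util_eHi_le hM j]
  have weight_e : M (e j) (eLo j) + M (e j) (eHi j) ≤ 1 := hM.add_le_one (e j) (by simp)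
  have weight_eLo : M (eLo j) (f j) + M (eLo j) (e j) ≤ 1 := hM.add_le_one (eLo j) (by simp)
  have f_lo_le_half : M (f j) (eLo j) ≤ 1 / 2 := by
    rw [hM.symm (eLo j) (f j), hM.symm (eLo j) (e j)] at weight_eLo
    linarith
  have weight_f : ∑ u, M (f j) u = M (f j) (eLo j) + M (f j) (eHi j) :=
    hM.sum_eq_add_of_adj_imp (by simp) fun _ => eq_eLo_or_eq_eHi_of_adj_f
  have weight_f_le : ∑ u, M (f j) u ≤ 5 / 6 := by
    calc ∑ u, M (f j) u
        ≤ M (f j) (eLo j) / 3 + 2 / 3 * (M (e j) (eLo j) + M (e j) (eHi j)) := by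
          rw [weight_f]
          linarith
      _ ≤ 1 / 2 / 3 + 2 / 3 * 1 := by gcongr
      _ = 5 / 6 := by norm_num
  exact hf.not_ge weight_f_le

end EdgeGadget

/-- in any fractional matching of the edge-gadget graph, if the agent
`f_j` is fully matched, then `U_M(e_j^i) < sat(e_j^i, u_i) = 5` or
`U_M(e_j^{i'}) < sat(e_j^{i'}, u_{i'}) = 7`. -/
theorem edgeGadget_fj_fullyMatched
    (n m : ℕ) (lo hi : Fin m → Fin n)
    (hlh : ∀ j, lo j < hi j)
    (hinj : Function.Injective (fun j => (lo j, hi j)))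
    (s : Fin n → Fin m → ℚ)
    (hs0 : ∀ i j, 0 ≤ s i j) (hs5 : ∀ i j, s i j ≤ 5 * m)
    (M : GV n m → GV n m → ℝ)
    (hM : IsMatching (gadgetSat n m lo hi s) M)
    (j : Fin m)
    (hfull : ∑ u, M (Sum.inl (j, (1 : Fin 6))) u = 1) :
    util (gadgetSat n m lo hi s) M (Sum.inl (j, (4 : Fin 6))) < 5 ∨
    util (gadgetSat n m lo hi s) M (Sum.inl (j, (5 : Fin 6))) < 7 := by
  exact edgeGadget_fj_fullyMatched_general hM j (by rw [hfull]; norm_num)
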